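/- Let G_n, n ≥ 2, be the random graphs of Construction 1 built from distributions ν_n, with D_n = |S_n|, and suppose D_n/n converges in distribution to a probability measure ν on [0,1] as n → ∞. Then for every finite simple graph F with vertex set {1,…,m}, t(F, G_n) → t(F,W) in probability as n → ∞, where t(F,W) = ∫_{S^m} ∏_{{i,j}∈E(F)} W(x_i,x_j) dμ_ν(x₁)⋯dμ_ν(x_m) is the homomorphism density of F in the kernel W on (S, μ_ν), μ_ν = ν × λ on S = [0,1]². -/

import Mathlib

open MeasureTheory Filter
open scoped ENNReal

instance (n : ℕ) : MeasurableSpace (Finset (Fin n)) := ⊤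

/-- The law of the random neighbourhood set `S_v ⊆ {i : i < v}` of vertex `v` in
Construction 1: `P(S_v = A) = q_v(|A|) / C(v, |A|)` for `A ⊆ {i : i < v}` (`v` has `v`
predecessors since vertices are 0-indexed; `q v` is the indegree distribution of `v`,
supported on `{0,…,v}`). -/
noncomputable def nbhdMeasure (n : ℕ) (q : ℕ → ℕ → ℝ≥0∞) (v : Fin n) :
    Measure (Finset (Fin n)) :=
  ∑ A : Finset (Fin n),
    (if A ⊆ Finset.Iio v then q v A.card / ((v : ℕ).choose A.card : ℝ≥0∞) else 0) •
      Measure.dirac A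

/-- The joint law of the independent random sets `S_v`, `v` a vertex of `G_n`. -/
noncomputable def con1Measure (n : ℕ) (q : ℕ → ℕ → ℝ≥0∞) :
    Measure (Fin n → Finset (Fin n)) :=
  Measure.pi fun v => nbhdMeasure n q v

/-- The graph `G_n` of Construction 1: for `i < k`, the edge `{i,k}` is present
iff `i ∈ S_k`. -/
def graphOf {n : ℕ} (ω : Fin n → Finset (Fin n)) : SimpleGraph (Fin n) where
  Adj i j := (i < j ∧ i ∈ ω j) ∨ (j < i ∧ j ∈ ω i)
  symm := ⟨fun _ _ h => h.symm⟩
  loopless := ⟨fun i h => by rcases h with ⟨h, -⟩ | ⟨h, -⟩ <;> exact absurd h (lt_irrefl i)⟩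

/-- Lebesgue measure on `[0,1]`, as a (probability) measure on `ℝ`. -/
noncomputable def unif01 : Measure ℝ := volume.restrict (Set.Icc (0 : ℝ) 1)

/-- The measure `μ_ν = ν × λ` on `S = [0,1]²`. -/
noncomputable def muNu (ν : Measure ℝ) : Measure (ℝ × ℝ) := ν.prod unif01

/-- The kernel `W` on `S = [0,1]²`:
`W((s₁,t₁),(s₂,t₂)) = s₂` if `t₁ < t₂`, `s₁` if `t₁ > t₂`, and `0` if `t₁ = t₂`. -/
noncomputable def Wker : ℝ × ℝ → ℝ × ℝ → ℝ := fun x y =>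
  if x.2 < y.2 then y.1 else if y.2 < x.2 then x.1 else 0

/-- `∏_{{i,j} ∈ E(F)} W(x_i, x_j)`. -/
noncomputable def edgeProd {m : ℕ} {α : Type*} (F : SimpleGraph (Fin m))
    [DecidableRel F.Adj] (W : α → α → ℝ) (x : Fin m → α) : ℝ :=
  ∏ p ∈ Finset.univ.filter (fun p : Fin m × Fin m => p.1 < p.2 ∧ F.Adj p.1 p.2),
    W (x p.1) (x p.2)

/-- `n(F,G)`: the number of homomorphisms `F → G`. -/
noncomputable def homCount {m n : ℕ} (F : SimpleGraph (Fin m)) (G : SimpleGraph (Fin n)) : ℕ :=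
  Nat.card {φ : Fin m → Fin n // ∀ i j, F.Adj i j → G.Adj (φ i) (φ j)}

instance instDiscFin (n : ℕ) : DiscreteMeasurableSpace (Finset (Fin n)) := ⟨fun _ => trivial⟩

noncomputable def aR (q : ℕ → ℕ → ℝ≥0∞) (r v : ℕ) : ℝ :=
  ∑ d ∈ Finset.range (v + 1), (q v d).toReal * ((d.choose r : ℝ) / (v.choose r : ℝ))

lemma q_le_one {q : ℕ → ℕ → ℝ≥0∞} (hq1 : ∀ v : ℕ, ∑ d ∈ Finset.range (v + 1), q v d = 1)
    (hq0 : ∀ v d : ℕ, v < d → q v d = 0) (v d : ℕ) : q v d ≤ 1 := by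
  by_cases h : v < d
  · simp [hq0 v d h]
  · rw [← hq1 v]
    exact Finset.single_le_sum (f := fun d => q v d) (fun _ _ => zero_le) (by simp; omega)

lemma q_sum_real {q : ℕ → ℕ → ℝ≥0∞} (hq1 : ∀ v : ℕ, ∑ d ∈ Finset.range (v + 1), q v d = 1)
    (hq0 : ∀ v d : ℕ, v < d → q v d = 0) (v : ℕ) :
    ∑ d ∈ Finset.range (v + 1), (q v d).toReal = 1 := by
  rw [← ENNReal.toReal_sum (fun d _ => ne_top_of_le_ne_top ENNReal.one_ne_top (q_le_one hq1 hq0 v d)),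
    hq1]; simp

lemma nbhd_apply (n : ℕ) (q : ℕ → ℕ → ℝ≥0∞) (v : Fin n) (R : Finset (Fin n))
    (hR : R ⊆ Finset.Iio v) :
    nbhdMeasure n q v {A | R ⊆ A} = ∑ e ∈ Finset.range ((v : ℕ) - R.card + 1),
      ((v : ℕ) - R.card).choose e • (q v (R.card + e) / ((v : ℕ).choose (R.card + e) : ℝ≥0∞)) := by
  unfold nbhdMeasure
  simp only [Measure.coe_finsetSum, Measure.coe_smul, Finset.sum_apply, Pi.smul_apply]
  have h1 : ∀ A : Finset (Fin n),
      (if A ⊆ Finset.Iio v then q v A.card / ((v : ℕ).choose A.card : ℝ≥0∞) else 0) •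
        (Measure.dirac A) {A | R ⊆ A} =
      if A ∈ Finset.Icc R (Finset.Iio v) then q v A.card / ((v : ℕ).choose A.card : ℝ≥0∞) else 0 := by
    intro A
    rw [Measure.dirac_apply' _ (MeasurableSet.of_discrete)]
    by_cases h : A ⊆ Finset.Iio v <;> by_cases h' : R ⊆ A <;> simp [h, h', Set.indicator]
  rw [Finset.sum_congr rfl (fun A _ => h1 A), Finset.sum_ite_mem, Finset.univ_inter,
    Finset.Icc_eq_image_powerset hR, Finset.sum_image]
  · have hc : (Finset.Iio v \ R).card = (v : ℕ) - R.card := by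
      rw [Finset.card_sdiff_of_subset hR]; simp
    rw [← hc, ← Finset.sum_powerset_apply_card
      (fun e => q v (R.card + e) / ((v : ℕ).choose (R.card + e) : ℝ≥0∞))]
    apply Finset.sum_congr rfl
    intro B hB
    have hd : Disjoint R B := by
      rw [Finset.mem_powerset] at hB
      exact Finset.disjoint_of_subset_right hB Finset.disjoint_sdiff
    rw [Finset.card_union_of_disjoint hd]
  · intro B hB C hC h
    simp only [Finset.coe_powerset, Set.mem_preimage, Set.mem_powerset_iff, Finset.coe_subset] at hB hC
    have hd : Disjoint R B := Finset.disjoint_of_subset_right hB Finset.disjoint_sdiff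
    have hd' : Disjoint R C := Finset.disjoint_of_subset_right hC Finset.disjoint_sdiff
    dsimp at h
    rw [← Finset.union_sdiff_cancel_left hd, h, Finset.union_sdiff_cancel_left hd']

lemma nbhd_real {q : ℕ → ℕ → ℝ≥0∞} (hq1 : ∀ v : ℕ, ∑ d ∈ Finset.range (v + 1), q v d = 1)
    (hq0 : ∀ v d : ℕ, v < d → q v d = 0) (n : ℕ) (v : Fin n) (R : Finset (Fin n))
    (hR : R ⊆ Finset.Iio v) :
    (nbhdMeasure n q v).real {A | R ⊆ A} = aR q R.card v := by
  have hr : R.card ≤ (v : ℕ) := by simpa using Finset.card_le_card hR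
  rw [measureReal_def, nbhd_apply n q v R hR, ENNReal.toReal_sum]
  · unfold aR
    rw [show (v : ℕ) + 1 = R.card + ((v : ℕ) - R.card + 1) by omega, Finset.sum_range_add _ R.card]
    rw [Finset.sum_eq_zero (s := Finset.range R.card), zero_add]
    · apply Finset.sum_congr rfl
      intro e he
      simp only [Finset.mem_range] at he
      have h := @Nat.choose_mul v (R.card + e) R.card (by omega)
      rw [Nat.add_sub_cancel_left] at h
      have p1 : (0:ℝ) < (v : ℕ).choose (R.card + e) := by
        exact_mod_cast Nat.choose_pos (by omega)
      have p2 : (0:ℝ) < (v : ℕ).choose R.card := by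
        exact_mod_cast Nat.choose_pos (by omega)
      have h' : ((v : ℕ).choose (R.card + e) : ℝ) * ((R.card + e).choose R.card : ℝ) =
        ((v : ℕ).choose R.card : ℝ) * (((v : ℕ) - R.card).choose e : ℝ) := by exact_mod_cast h
      simp only [nsmul_eq_mul, ENNReal.toReal_mul, ENNReal.toReal_natCast, ENNReal.toReal_div]
      field_simp
      linear_combination (-(q v (R.card + e)).toReal) * h'
    · intro d hd
      rw [Nat.choose_eq_zero_of_lt (by simpa using hd)]; simp
  · intro e he
    simp only [Finset.mem_range] at he
    rw [nsmul_eq_mul]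
    refine ENNReal.mul_ne_top (by simp) (ENNReal.div_ne_top ?_ ?_)
    · exact ne_top_of_le_ne_top ENNReal.one_ne_top (q_le_one hq1 hq0 _ _)
    · have := Nat.choose_pos (n := v) (k := R.card + e) (by omega)
      exact_mod_cast this.ne'

lemma nbhd_prob {q : ℕ → ℕ → ℝ≥0∞} (hq1 : ∀ v : ℕ, ∑ d ∈ Finset.range (v + 1), q v d = 1)
    (hq0 : ∀ v d : ℕ, v < d → q v d = 0) (n : ℕ) (v : Fin n) :
    IsProbabilityMeasure (nbhdMeasure n q v) := by
  have h := nbhd_real hq1 hq0 n v ∅ (by simp)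
  have h2 : (nbhdMeasure n q v).real Set.univ = 1 := by
    simpa [aR, q_sum_real hq1 hq0] using h
  constructor
  rw [measureReal_def] at h2
  exact (ENNReal.toReal_eq_one_iff _).mp h2

lemma choose_ratio_bound (r : ℕ) : ∃ δ : ℕ → ℝ, Tendsto δ atTop (nhds 0) ∧
    ∀ v : ℕ, r < v → ∀ d : ℕ, d ≤ v →
      |(d.choose r : ℝ) / (v.choose r : ℝ) - ((d : ℝ) / ((v : ℝ) + 1)) ^ r| ≤ δ v := by
  induction r with
  | zero => exact ⟨fun _ => 0, tendsto_const_nhds, by simp⟩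
  | succ r ih =>
    obtain ⟨δ, hδ, h⟩ := ih
    refine ⟨fun v => δ v + (r + 1 : ℝ) / ((v : ℝ) - r), ?_, ?_⟩
    · rw [show (0:ℝ) = 0 + 0 by simp]
      refine hδ.add ?_
      refine Tendsto.const_div_atTop ?_ _
      exact tendsto_atTop_add_const_right _ (-(r:ℝ)) tendsto_natCast_atTop_atTop
    · intro v hv d hd
      have hv' : (r : ℝ) + 1 < v := by exact_mod_cast hv
      have hd' : (d : ℝ) ≤ v := by exact_mod_cast hd
      have p1 : (0:ℝ) < v.choose r := by exact_mod_cast Nat.choose_pos (by omega)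
      have p2 : (0:ℝ) < v.choose (r+1) := by exact_mod_cast Nat.choose_pos (by omega)
      have hd0 : (0:ℝ) ≤ d := by positivity
      have hr0 : (0:ℝ) ≤ r := by positivity
      have hvr : (0:ℝ) < (v:ℝ) - r := by linarith
      have e1 : (v.choose (r+1) : ℝ) * (r+1) = v.choose r * ((v:ℝ) - r) := by
        have := Nat.choose_succ_right_eq v r
        rw [← Nat.cast_sub (by omega)]
        exact_mod_cast this
      have e2 : (d.choose (r+1) : ℝ) * (r+1) = d.choose r * (((d - r : ℕ) : ℝ)) := by
        have := Nat.choose_succ_right_eq d r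
        exact_mod_cast this
      have e3 : (d.choose (r+1) : ℝ) / (v.choose (r+1) : ℝ) =
          ((d.choose r : ℝ) / (v.choose r : ℝ)) * (((d - r : ℕ) : ℝ) / ((v:ℝ) - r)) := by
        have : (0:ℝ) < r + 1 := by positivity
        rw [← mul_div_mul_right _ _ this.ne', e1, e2]
        field_simp
      rw [e3, pow_succ]
      set x := (d.choose r : ℝ) / (v.choose r : ℝ)
      set x' := ((d : ℝ) / ((v : ℝ) + 1)) ^ r
      set y := (((d - r : ℕ) : ℝ) / ((v:ℝ) - r))
      set y' := ((d : ℝ) / ((v : ℝ) + 1))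
      have hy0 : 0 ≤ y' := by positivity
      have hy1 : y' ≤ 1 := by
        rw [div_le_one (by positivity)]; linarith
      have hx0 : 0 ≤ x := by positivity
      have hx1 : x ≤ 1 := by
        rw [div_le_one p1]; exact_mod_cast Nat.choose_le_choose r hd
      have hy : |y - y'| ≤ (r + 1 : ℝ) / ((v : ℝ) - r) := by
        have hyy : y' = d / ((v:ℝ)+1) := rfl
        have hy2 : y = ((d - r : ℕ) : ℝ) / ((v:ℝ) - r) := rfl
        have k1 : ((d - r : ℕ) : ℝ) ≤ d := by exact_mod_cast Nat.sub_le d r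
        have k2 : (d : ℝ) - r ≤ ((d - r : ℕ) : ℝ) := by
          rw [sub_le_iff_le_add]; exact_mod_cast (by omega : d ≤ d - r + r)
        have k3 : ((d - r : ℕ) : ℝ) ≤ v - r := by
          rw [← Nat.cast_sub (by omega)]; exact_mod_cast (by omega : d - r ≤ v - r)
        have k4 : (0:ℝ) ≤ ((d - r : ℕ) : ℝ) := by positivity
        have : (y - y') = (((d - r : ℕ) : ℝ) - y' * (v - r)) / (v - r) := by
          rw [hy2]; field_simp
        rw [this, abs_div, abs_of_pos hvr]
        gcongr
        have k5 : y' * (v + 1) = d := by rw [hyy]; field_simp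
        have k6 : y' * r ≤ r := by nlinarith
        rw [abs_le]; constructor <;> nlinarith
      calc |x * y - x' * y'| = |x * (y - y') + (x - x') * y'| := by ring_nf
        _ ≤ |x * (y - y')| + |(x - x') * y'| := abs_add_le _ _
        _ = x * |y - y'| + |x - x'| * y' := by
            rw [abs_mul, abs_mul, abs_of_nonneg hx0, abs_of_nonneg hy0]
        _ ≤ 1 * |y - y'| + |x - x'| * 1 := by gcongr
        _ ≤ _ := by
            have := h v (by omega) d hd
            linarith

lemma aR_tendsto (ν : Measure ℝ) [IsProbabilityMeasure ν] (hν : ν (Set.Icc 0 1) = 1)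
    {q : ℕ → ℕ → ℝ≥0∞}
    (hq1 : ∀ v : ℕ, ∑ d ∈ Finset.range (v + 1), q v d = 1)
    (hq0 : ∀ v d : ℕ, v < d → q v d = 0)
    (hconv : ∀ f : BoundedContinuousFunction ℝ ℝ,
      Tendsto (fun k => ∑ d ∈ Finset.range k, (q (k - 1) d).toReal * f ((d : ℝ) / k))
        atTop (nhds (∫ x, f x ∂ν))) (r : ℕ) :
    Tendsto (aR q r) atTop (nhds (∫ x, x ^ r ∂ν)) := by
  have hcl : ∀ x : ℝ, 0 ≤ max 0 (min x 1) ∧ max 0 (min x 1) ≤ 1 := fun x =>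
    ⟨le_max_left _ _, max_le zero_le_one (min_le_right _ _)⟩
  let f : BoundedContinuousFunction ℝ ℝ := BoundedContinuousFunction.ofNormedAddCommGroup
    (fun x => (max 0 (min x 1)) ^ r) (by fun_prop) 1 (by
      intro x
      rw [Real.norm_eq_abs, abs_of_nonneg (pow_nonneg (hcl x).1 _)]
      exact pow_le_one₀ (hcl x).1 (hcl x).2)
  have hf : ∀ x, 0 ≤ x → x ≤ 1 → f x = x ^ r := by
    intro x h0 h1
    change (max 0 (min x 1)) ^ r = _
    rw [min_eq_left h1, max_eq_right h0]
  have hint : ∫ x, f x ∂ν = ∫ x, x ^ r ∂ν := by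
    apply integral_congr_ae
    have : ∀ᵐ x ∂ν, x ∈ Set.Icc (0:ℝ) 1 := (prob_compl_eq_zero_iff measurableSet_Icc).2 hν
    filter_upwards [this] with x hx using hf x hx.1 hx.2
  have hc := (tendsto_add_atTop_iff_nat 1).2 (hconv f)
  rw [hint] at hc
  obtain ⟨δ, hδ, hb⟩ := choose_ratio_bound r
  refine hc.congr_dist ?_
  refine squeeze_zero' (Eventually.of_forall fun _ => dist_nonneg) ?_ hδ
  filter_upwards [eventually_gt_atTop r] with v hv
  rw [dist_comm, Real.dist_eq]
  unfold aR
  rw [← Finset.sum_sub_distrib]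
  refine (Finset.abs_sum_le_sum_abs _ _).trans ?_
  calc _ ≤ ∑ d ∈ Finset.range (v + 1), (q v d).toReal * δ v := by
        apply Finset.sum_le_sum
        intro d hd
        have hd : d ≤ v := by simp at hd; omega
        have hd' : (d : ℝ) ≤ v := by exact_mod_cast hd
        simp only [Nat.add_sub_cancel]
        rw [hf _ (by positivity) (by rw [div_le_one (by positivity)]; push_cast; linarith),
          ← mul_sub, abs_mul, abs_of_nonneg ENNReal.toReal_nonneg]
        gcongr
        push_cast
        exact hb v hv d hd
    _ = δ v := by rw [← Finset.sum_mul, q_sum_real hq1 hq0, one_mul]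

def Hset {m n : ℕ} (F : SimpleGraph (Fin m)) (φ : Fin m → Fin n) :
    Set (Fin n → Finset (Fin n)) :=
  {ω | ∀ i j, F.Adj i j → (graphOf ω).Adj (φ i) (φ j)}

def Bset {m n : ℕ} (F : SimpleGraph (Fin m)) (φ : Fin m → Fin n) (v : Fin n) :
    Set (Finset (Fin n)) :=
  {A | ∀ i j, F.Adj i j → φ i = v → φ j < v → φ j ∈ A}

lemma Hset_eq {m n : ℕ} (F : SimpleGraph (Fin m)) (φ : Fin m → Fin n)
    (h : ∀ i j, F.Adj i j → φ i ≠ φ j) : Hset F φ = Set.univ.pi (Bset F φ) := by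
  ext ω
  simp only [Hset, Bset, Set.mem_ofPred_eq, Set.mem_pi, Set.mem_univ, true_imp_iff]
  constructor
  · intro H v i j hij hv hlt
    subst hv
    rcases H i j hij with ⟨h1, h2⟩ | ⟨h1, h2⟩
    · exact absurd h1 (lt_asymm hlt)
    · exact h2
  · intro H i j hij
    rcases lt_or_gt_of_ne (h i j hij) with hlt | hlt
    · exact Or.inl ⟨hlt, H _ j i hij.symm rfl hlt⟩
    · exact Or.inr ⟨hlt, H _ i j hij rfl hlt⟩

lemma Hset_empty {m n : ℕ} (F : SimpleGraph (Fin m)) (φ : Fin m → Fin n)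
    (h : ¬ ∀ i j, F.Adj i j → φ i ≠ φ j) : Hset F φ = ∅ := by
  push Not at h
  obtain ⟨i, j, hij, he⟩ := h
  ext ω
  simp only [Hset, Set.mem_ofPred_eq, Set.mem_empty_iff_false, iff_false]
  intro H
  have := H i j hij
  rw [he] at this
  exact (graphOf ω).loopless.irrefl _ this

lemma Hset_indep {q : ℕ → ℕ → ℝ≥0∞} (hq1 : ∀ v : ℕ, ∑ d ∈ Finset.range (v + 1), q v d = 1)
    (hq0 : ∀ v d : ℕ, v < d → q v d = 0) {m n : ℕ} (F : SimpleGraph (Fin m))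
    (φ ψ : Fin m → Fin n) (hd : ∀ i j, φ i ≠ ψ j) :
    (con1Measure n q).real (Hset F φ ∩ Hset F ψ) =
      (con1Measure n q).real (Hset F φ) * (con1Measure n q).real (Hset F ψ) := by
  have := nbhd_prob hq1 hq0 n
  by_cases h1 : ∀ i j, F.Adj i j → φ i ≠ φ j
  · by_cases h2 : ∀ i j, F.Adj i j → ψ i ≠ ψ j
    · rw [Hset_eq F φ h1, Hset_eq F ψ h2, ← Set.pi_inter_distrib]
      simp only [measureReal_def, con1Measure, Measure.pi_pi]
      rw [← ENNReal.toReal_mul, ← Finset.prod_mul_distrib]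
      congr 1
      apply Finset.prod_congr rfl
      intro v _
      by_cases hv : ∃ i, φ i = v
      · obtain ⟨i, rfl⟩ := hv
        have : Bset F ψ (φ i) = Set.univ := by
          ext A; simp only [Bset, Set.mem_ofPred_eq, Set.mem_univ, iff_true]
          intro j k _ h; exact absurd h.symm (hd i j)
        simp [this]
      · have : Bset F φ v = Set.univ := by
          ext A; simp only [Bset, Set.mem_ofPred_eq, Set.mem_univ, iff_true]
          intro j k _ h; exact absurd ⟨j, h⟩ hv
        simp [this]
    · simp [Hset_empty F ψ h2]
  · simp [Hset_empty F φ h1]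

lemma Hset_prob {q : ℕ → ℕ → ℝ≥0∞} (hq1 : ∀ v : ℕ, ∑ d ∈ Finset.range (v + 1), q v d = 1)
    (hq0 : ∀ v d : ℕ, v < d → q v d = 0) {m n : ℕ} (F : SimpleGraph (Fin m)) [DecidableRel F.Adj]
    (φ : Fin m → Fin n) (hφ : Function.Injective φ) :
    (con1Measure n q).real (Hset F φ) =
      ∏ i, aR q (Finset.univ.filter (fun j => F.Adj i j ∧ φ j < φ i)).card (φ i) := by
  have := nbhd_prob hq1 hq0 n
  rw [Hset_eq F φ (fun i j h h' => h.ne (hφ h'))]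
  simp only [measureReal_def, con1Measure, Measure.pi_pi]
  rw [ENNReal.toReal_prod]
  have key : ∏ v, (nbhdMeasure n q v (Bset F φ v)).toReal =
      ∏ v ∈ Finset.univ.image φ, (nbhdMeasure n q v (Bset F φ v)).toReal := by
    symm
    apply Finset.prod_subset (Finset.subset_univ _)
    intro v _ hv
    have : Bset F φ v = Set.univ := by
      ext A; simp only [Bset, Set.mem_ofPred_eq, Set.mem_univ, iff_true]
      intro j k _ h; exact absurd (by simp; exact ⟨j, h⟩) hv
    simp [this]
  rw [key, Finset.prod_image (fun _ _ _ _ h => hφ h)]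
  apply Finset.prod_congr rfl
  intro i _
  have hB : Bset F φ (φ i) =
      {A | (Finset.univ.filter (fun j => F.Adj i j ∧ φ j < φ i)).image φ ⊆ A} := by
    ext A
    simp only [Bset, Set.mem_ofPred_eq]
    constructor
    · intro H x hx
      simp only [Finset.mem_image, Finset.mem_filter, Finset.mem_univ, true_and] at hx
      obtain ⟨j, ⟨h1, h2⟩, rfl⟩ := hx
      exact H i j h1 rfl h2
    · intro H i' j hij he hlt
      obtain rfl := hφ he
      exact H (by simp; exact ⟨j, ⟨hij, hlt⟩, rfl⟩)
  rw [hB, ← measureReal_def, nbhd_real hq1 hq0, Finset.card_image_of_injective _ hφ]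
  intro x hx
  simp only [Finset.mem_image, Finset.mem_filter, Finset.mem_univ, true_and] at hx
  obtain ⟨j, ⟨h1, h2⟩, rfl⟩ := hx
  simpa using h2

open Classical in
lemma homCount_eq {m n : ℕ} (F : SimpleGraph (Fin m)) (ω : Fin n → Finset (Fin n)) :
    (homCount F (graphOf ω) : ℝ) = ∑ φ : Fin m → Fin n, (Hset F φ).indicator 1 ω := by
  unfold homCount
  rw [Nat.card_eq_fintype_card, Fintype.card_subtype, Finset.card_filter]
  push_cast
  apply Finset.sum_congr rfl
  intro φ _
  simp only [Set.indicator, Hset, Set.mem_ofPred_eq, Pi.one_apply]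
  congr

lemma card_coinc {m n : ℕ} (ψ : Fin m → Fin (n+1)) (i j : Fin m) :
    ((n:ℝ)+1) * ∑ φ : Fin m → Fin (n+1), (if φ i = ψ j then (1:ℝ) else 0) = ((n:ℝ)+1)^m := by
  have h := Fintype.card_filter_piFinset_const_eq_of_mem (κ := Fin (n+1)) (ι := Fin m)
    Finset.univ i (x := ψ j) (Finset.mem_univ _)
  simp only [Fintype.piFinset_univ, Finset.card_univ, Fintype.card_fin] at h
  rw [← Finset.sum_filter, Finset.sum_const, h, nsmul_eq_mul, mul_one]
  have : 0 < m := i.pos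
  push_cast
  rw [← pow_succ']
  congr 1; omega

lemma var_bound {q : ℕ → ℕ → ℝ≥0∞} (hq1 : ∀ v : ℕ, ∑ d ∈ Finset.range (v + 1), q v d = 1)
    (hq0 : ∀ v d : ℕ, v < d → q v d = 0) {m n : ℕ} (F : SimpleGraph (Fin m)) (c : ℝ) :
    ∫ ω, ((homCount F (graphOf ω) : ℝ) / ((n:ℝ)+1)^m - c)^2 ∂(con1Measure (n+1) q) ≤
      (m:ℝ)^2 / ((n:ℝ)+1) +
      ((∑ φ : Fin m → Fin (n+1), (con1Measure (n+1) q).real (Hset F φ)) / ((n:ℝ)+1)^m - c)^2 := by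
  have := nbhd_prob hq1 hq0 (n+1)
  have : IsProbabilityMeasure (con1Measure (n+1) q) := by unfold con1Measure; infer_instance
  set μ := con1Measure (n+1) q
  set N : ℝ := (n:ℝ)+1 with hN
  have hNpos : 0 < N := by positivity
  have hE1 : ∫ ω, (homCount F (graphOf ω) : ℝ) ∂μ = ∑ φ : Fin m → Fin (n+1), μ.real (Hset F φ) := by
    simp_rw [homCount_eq]
    rw [integral_finsetSum _ (fun _ _ => Integrable.of_finite)]
    apply Finset.sum_congr rfl
    intro φ _
    rw [integral_indicator_one MeasurableSet.of_discrete]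
  have hE2 : ∫ ω, (homCount F (graphOf ω) : ℝ)^2 ∂μ =
      ∑ φ : Fin m → Fin (n+1), ∑ ψ : Fin m → Fin (n+1), μ.real (Hset F φ ∩ Hset F ψ) := by
    simp_rw [homCount_eq, sq, Finset.sum_mul_sum]
    rw [integral_finsetSum _ (fun _ _ => Integrable.of_finite)]
    apply Finset.sum_congr rfl
    intro φ _
    rw [integral_finsetSum _ (fun _ _ => Integrable.of_finite)]
    apply Finset.sum_congr rfl
    intro ψ _
    rw [← integral_indicator_one MeasurableSet.of_discrete, Set.inter_indicator_one]
    rfl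
  set E := ∑ φ : Fin m → Fin (n+1), μ.real (Hset F φ)
  have hv : ∑ φ : Fin m → Fin (n+1), ∑ ψ : Fin m → Fin (n+1), μ.real (Hset F φ ∩ Hset F ψ) ≤
      E ^ 2 + ∑ φ : Fin m → Fin (n+1), ∑ ψ : Fin m → Fin (n+1), ∑ i, ∑ j,
        (if φ i = ψ j then (1:ℝ) else 0) := by
    rw [sq, Finset.sum_mul_sum, ← Finset.sum_add_distrib]
    apply Finset.sum_le_sum; intro φ _
    rw [← Finset.sum_add_distrib]
    apply Finset.sum_le_sum; intro ψ _
    have hnn : ∀ i ∈ (Finset.univ : Finset (Fin m)), 0 ≤ ∑ j, (if φ i = ψ j then (1:ℝ) else 0) :=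
      fun i _ => Finset.sum_nonneg (fun j _ => by split_ifs <;> norm_num)
    by_cases hd : ∀ i j, φ i ≠ ψ j
    · rw [Hset_indep hq1 hq0 F φ ψ hd]
      have := Finset.sum_nonneg hnn
      linarith
    · push Not at hd
      obtain ⟨i, j, hij⟩ := hd
      have h1 : (1:ℝ) ≤ ∑ i, ∑ j, (if φ i = ψ j then (1:ℝ) else 0) := by
        refine le_trans ?_ (Finset.single_le_sum hnn (Finset.mem_univ i))
        refine le_trans ?_ (Finset.single_le_sum (fun j _ => by split_ifs <;> norm_num)
          (Finset.mem_univ j))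
        simp [hij]
      have h2 : μ.real (Hset F φ ∩ Hset F ψ) ≤ 1 := measureReal_le_one
      have h3 : 0 ≤ μ.real (Hset F φ) * μ.real (Hset F ψ) := by positivity
      linarith
  have hc : ∑ φ : Fin m → Fin (n+1), ∑ ψ : Fin m → Fin (n+1), ∑ i, ∑ j,
        (if φ i = ψ j then (1:ℝ) else 0) = (N^m)^2 * ((m:ℝ)^2 / N) := by
    rw [Finset.sum_comm]
    have : ∀ ψ : Fin m → Fin (n+1), ∑ φ : Fin m → Fin (n+1), ∑ i, ∑ j,
        (if φ i = ψ j then (1:ℝ) else 0) = (m:ℝ)^2 * (N^m / N) := by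
      intro ψ
      rw [Finset.sum_comm]
      have : ∀ i, ∑ φ : Fin m → Fin (n+1), ∑ j, (if φ i = ψ j then (1:ℝ) else 0) =
          m * (N^m / N) := by
        intro i
        rw [Finset.sum_comm]
        have : ∀ j, ∑ φ : Fin m → Fin (n+1), (if φ i = ψ j then (1:ℝ) else 0) = N^m / N := by
          intro j
          rw [eq_div_iff hNpos.ne', mul_comm]
          exact card_coinc ψ i j
        simp [this]
      simp only [this, Finset.sum_const, Finset.card_univ, Fintype.card_fin, nsmul_eq_mul]
      ring
    simp only [this, Finset.sum_const, Finset.card_univ, Fintype.card_fin, Fintype.card_fun,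
      nsmul_eq_mul]
    push_cast
    rw [← hN]
    ring
  have hexp : ∫ ω, ((homCount F (graphOf ω) : ℝ) / N^m - c)^2 ∂μ =
      (∫ ω, (homCount F (graphOf ω) : ℝ)^2 ∂μ) / (N^m)^2 -
        2 * c * (∫ ω, (homCount F (graphOf ω) : ℝ) ∂μ) / N^m + c^2 := by
    have : ∀ ω : Fin (n+1) → Finset (Fin (n+1)), ((homCount F (graphOf ω) : ℝ) / N^m - c)^2 =
      (homCount F (graphOf ω) : ℝ)^2 * (1/(N^m)^2) - (homCount F (graphOf ω) : ℝ) * (2*c/N^m) + c^2 := by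
      intro ω; ring
    simp_rw [this]
    rw [integral_add Integrable.of_finite Integrable.of_finite,
      integral_sub Integrable.of_finite Integrable.of_finite, integral_mul_const,
      integral_mul_const]
    simp
    ring
  rw [hexp, hE1, hE2]
  rw [hc] at hv
  have hP : 0 < (N^m)^2 := by positivity
  have := div_le_div_of_nonneg_right hv hP.le
  rw [add_div, mul_div_cancel_left₀ _ hP.ne'] at this
  have e : (E / N^m - c)^2 = E^2/(N^m)^2 - 2 * c * E / N^m + c^2 := by ring
  rw [e]
  linarith

instance instProbUnif : IsProbabilityMeasure unif01 := ⟨by simp [unif01]⟩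

lemma ae_unif : ∀ᵐ t ∂unif01, t ∈ Set.Ioo (0:ℝ) 1 := by
  unfold unif01
  rw [← restrict_Ioo_eq_restrict_Icc]
  exact ae_restrict_mem measurableSet_Ioo

noncomputable def flr (n : ℕ) (t : ℝ) : Fin (n+1) :=
  ⟨min ⌊((n:ℝ)+1) * t⌋₊ n, Nat.lt_succ_of_le (min_le_right _ _)⟩

lemma flr_meas (n : ℕ) : Measurable (flr n) := by
  have : flr n = (fun k : ℕ => (⟨min k n, Nat.lt_succ_of_le (min_le_right _ _)⟩ : Fin (n+1))) ∘
      (fun t : ℝ => ⌊((n:ℝ)+1) * t⌋₊) := rfl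
  rw [this]
  exact (Measurable.of_discrete).comp (Nat.measurable_floor.comp (by fun_prop))

lemma flr_val {n : ℕ} {t : ℝ} (ht : t ∈ Set.Ioo (0:ℝ) 1) :
    (flr n t : ℕ) = ⌊((n:ℝ)+1) * t⌋₊ := by
  apply min_eq_left
  apply Nat.le_of_lt_succ
  rw [Nat.floor_lt (by have := ht.1; positivity)]
  have : (0:ℝ) < (n:ℝ)+1 := by positivity
  push_cast
  nlinarith [ht.2]

lemma flr_map (n : ℕ) (k : Fin (n+1)) :
    (unif01.map (flr n)) {k} = ENNReal.ofReal (1 / ((n:ℝ)+1)) := by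
  have hN : (0:ℝ) < (n:ℝ)+1 := by positivity
  have hk : ((k:ℕ):ℝ) + 1 ≤ (n:ℝ) + 1 := by
    have := k.2
    exact_mod_cast this
  rw [Measure.map_apply (flr_meas n) (measurableSet_singleton k)]
  have h : (flr n ⁻¹' {k} : Set ℝ) =ᵐ[unif01]
      Set.Ico (((k:ℕ):ℝ) / ((n:ℝ)+1)) ((((k:ℕ):ℝ)+1) / ((n:ℝ)+1)) := by
    filter_upwards [ae_unif] with t ht
    apply propext
    change flr n t = k ↔ t ∈ Set.Ico _ _
    rw [Fin.ext_iff, flr_val ht, Nat.floor_eq_iff (by have := ht.1; positivity), Set.mem_Ico,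
      div_le_iff₀ hN, lt_div_iff₀ hN, mul_comm t]
  rw [measure_congr h, unif01, Measure.restrict_apply measurableSet_Ico,
    Set.inter_eq_left.2, Real.volume_Ico]
  · congr 1; field_simp; ring
  · intro t ht
    refine ⟨le_trans (by positivity) ht.1, ht.2.le.trans ?_⟩
    rw [div_le_one hN]; exact hk

lemma avg_eq {m n : ℕ} (h : (Fin m → Fin (n+1)) → ℝ) :
    (∑ φ, h φ) / ((n:ℝ)+1)^m =
      ∫ t : Fin m → ℝ, h (fun i => flr n (t i)) ∂(Measure.pi fun _ : Fin m => unif01) := by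
  have hN : (0:ℝ) < (n:ℝ)+1 := by positivity
  have hp : IsProbabilityMeasure (unif01.map (flr n)) :=
    Measure.isProbabilityMeasure_map (flr_meas n).aemeasurable
  have hm : Measurable (fun (t : Fin m → ℝ) (i : Fin m) => flr n (t i)) :=
    measurable_pi_lambda _ (fun i => (flr_meas n).comp (measurable_pi_apply i))
  rw [← integral_map (f := h) hm.aemeasurable (Measurable.of_discrete).aestronglyMeasurable,
    Measure.pi_map_pi (fun _ => (flr_meas n).aemeasurable),
    integral_fintype Integrable.of_finite, Finset.sum_div]
  apply Finset.sum_congr rfl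
  intro φ _
  rw [measureReal_def, Measure.pi_singleton]
  simp only [flr_map]
  rw [Finset.prod_const, ENNReal.toReal_pow, ENNReal.toReal_ofReal (by positivity)]
  simp
  field_simp

lemma ae_pi_of {m : ℕ} (μ : Measure ℝ) [IsProbabilityMeasure μ] {p : ℝ → Prop}
    (h : ∀ᵐ x ∂μ, p x) : ∀ᵐ t ∂(Measure.pi fun _ : Fin m => μ), ∀ i, p (t i) := by
  rw [ae_all_iff]
  intro i
  exact (Measure.tendsto_eval_ae_ae (μ := fun _ : Fin m => μ) (i := i)).eventually h

lemma ae_inj (m : ℕ) : ∀ᵐ t ∂(Measure.pi fun _ : Fin m => unif01), Function.Injective t := by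
  have h : ∀ i j : Fin m, i ≠ j → ∀ᵐ t ∂(Measure.pi fun _ : Fin m => unif01), t i ≠ t j := by
    intro i j hij
    unfold unif01
    rw [← Measure.restrict_pi_pi]
    apply ae_restrict_of_ae
    let s : Submodule ℝ (Fin m → ℝ) :=
      LinearMap.ker (LinearMap.proj (R := ℝ) (φ := fun _ : Fin m => ℝ) i - LinearMap.proj j)
    have hs : s ≠ ⊤ := by
      intro h
      have : (Pi.single i 1 : Fin m → ℝ) ∈ s := by rw [h]; trivial
      simp [s, LinearMap.mem_ker, Pi.single_apply, hij.symm] at this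
    have := Measure.addHaar_submodule (volume : Measure (Fin m → ℝ)) s hs
    rw [← volume_pi, ae_iff]
    refine measure_mono_null ?_ this
    intro t ht
    simp only [ne_eq, not_not, Set.mem_ofPred_eq] at ht
    simp [s, LinearMap.mem_ker, ht]
  have h' : ∀ᵐ t ∂(Measure.pi fun _ : Fin m => unif01), ∀ i j : Fin m, i ≠ j → t i ≠ t j := by
    rw [ae_all_iff]; intro i
    rw [ae_all_iff]; intro j
    by_cases hij : i = j
    · simp [hij]
    · filter_upwards [h i j hij] with t ht _ using ht
  filter_upwards [h'] with t ht i j hij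
  by_contra hne
  exact ht i j hne hij

def rho {m : ℕ} (F : SimpleGraph (Fin m)) [DecidableRel F.Adj] {α : Type*} [LinearOrder α]
    (t : Fin m → α) (i : Fin m) : ℕ :=
  (Finset.univ.filter (fun j => F.Adj i j ∧ t j < t i)).card

lemma edgeProd_eq {m : ℕ} (F : SimpleGraph (Fin m)) [DecidableRel F.Adj] (s t : Fin m → ℝ)
    (ht : Function.Injective t) :
    edgeProd F Wker (fun i => (s i, t i)) = ∏ i, s i ^ rho F t i := by
  let h : Fin m → Fin m → ℝ := fun i j => if F.Adj i j ∧ t j < t i then s i else 1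
  have h1 : ∏ i, s i ^ rho F t i = ∏ i, ∏ j, h i j := by
    apply Finset.prod_congr rfl
    intro i _
    simp only [h]
    rw [← Finset.prod_filter, Finset.prod_const]; rfl
  have h2 : ∏ i, ∏ j, h i j = ∏ i, ∏ j, if i < j then h i j * h j i else 1 := by
    have e : ∀ i j, h i j = (if i < j then h i j else 1) * (if j < i then h i j else 1) := by
      intro i j
      rcases lt_trichotomy i j with hl | hl | hl
      · simp [hl, hl.not_gt]
      · subst hl; simp [h]
      · simp [hl, hl.not_gt]
    calc ∏ i, ∏ j, h i j = ∏ i, ∏ j, (if i < j then h i j else 1) * (if j < i then h i j else 1) :=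
          Finset.prod_congr rfl fun i _ => Finset.prod_congr rfl fun j _ => e i j
      _ = (∏ i, ∏ j, (if i < j then h i j else 1)) * ∏ i, ∏ j, (if j < i then h i j else 1) := by
          simp only [Finset.prod_mul_distrib]
      _ = (∏ i, ∏ j, (if i < j then h i j else 1)) * ∏ i, ∏ j, (if i < j then h j i else 1) := by
          congr 1; rw [Finset.prod_comm]
      _ = _ := by
          simp only [← Finset.prod_mul_distrib]
          refine Finset.prod_congr rfl fun i _ => Finset.prod_congr rfl fun j _ => ?_
          split_ifs <;> simp
  rw [h1, h2, edgeProd, Finset.prod_filter, Fintype.prod_prod_type]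
  refine Finset.prod_congr rfl fun i _ => Finset.prod_congr rfl fun j _ => ?_
  dsimp only [h, Wker]
  by_cases hij : i < j
  · by_cases ha : F.Adj i j
    · rcases lt_or_gt_of_ne (fun e => hij.ne (ht e)) with hl | hl
      · simp [hij, ha, ha.symm, hl, hl.not_gt]
      · simp [hij, ha, ha.symm, hl, hl.not_gt]
    · have ha' : ¬ F.Adj j i := fun h => ha h.symm
      simp [ha, ha']
  · simp [hij]

lemma tFW (ν : Measure ℝ) [IsProbabilityMeasure ν] (hν : ν (Set.Icc 0 1) = 1)
    {m : ℕ} (F : SimpleGraph (Fin m)) [DecidableRel F.Adj] :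
    ∫ x : Fin m → ℝ × ℝ, edgeProd F Wker x ∂(Measure.pi fun _ : Fin m => muNu ν) =
      ∫ t : Fin m → ℝ, ∏ i, ∫ x, x ^ (rho F t i) ∂ν ∂(Measure.pi fun _ : Fin m => unif01) := by
  have mp := measurePreserving_arrowProdEquivProdArrow ℝ ℝ (Fin m) (fun _ => ν) (fun _ => unif01)
  have hν' : ∀ᵐ x ∂ν, x ∈ Set.Icc (0:ℝ) 1 := (prob_compl_eq_zero_iff measurableSet_Icc).2 hν
  let g : (Fin m → ℝ) × (Fin m → ℝ) → ℝ := fun p => edgeProd F Wker (fun i => (p.1 i, p.2 i))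
  have hg : Measurable g := by
    refine Finset.measurable_prod _ fun p _ => ?_
    dsimp only [Wker]
    refine Measurable.ite (measurableSet_lt (by fun_prop) (by fun_prop)) (by fun_prop) ?_
    exact Measurable.ite (measurableSet_lt (by fun_prop) (by fun_prop)) (by fun_prop) (by fun_prop)
  have hgi : Integrable g ((Measure.pi fun _ : Fin m => ν).prod
      (Measure.pi fun _ : Fin m => unif01)) := by
    refine Integrable.of_bound hg.aestronglyMeasurable 1 ?_
    have hs : ∀ᵐ p ∂((Measure.pi fun _ : Fin m => ν).prod
      (Measure.pi fun _ : Fin m => unif01)), ∀ i, p.1 i ∈ Set.Icc (0:ℝ) 1 :=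
      Measure.quasiMeasurePreserving_fst.ae (ae_pi_of ν hν')
    filter_upwards [hs] with p hp
    rw [Real.norm_eq_abs]
    dsimp only [g, edgeProd]
    rw [Finset.abs_prod]
    refine Finset.prod_le_one (fun _ _ => abs_nonneg _) fun e _ => ?_
    dsimp only [Wker]
    split_ifs
    · rw [abs_of_nonneg (hp _).1]; exact (hp _).2
    · rw [abs_of_nonneg (hp _).1]; exact (hp _).2
    · simp
  have e1 := mp.integral_comp' (g := g)
  have e2 : ∫ x : Fin m → ℝ × ℝ, edgeProd F Wker x ∂(Measure.pi fun _ : Fin m => muNu ν) =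
      ∫ p, g p ∂((Measure.pi fun _ : Fin m => ν).prod (Measure.pi fun _ : Fin m => unif01)) := by
    rw [← e1]; rfl
  rw [e2, integral_prod_symm _ hgi]
  apply integral_congr_ae
  filter_upwards [ae_inj m] with t ht
  dsimp only [g]
  simp_rw [edgeProd_eq F _ t ht]
  exact integral_fintype_prod_eq_prod (𝕜 := ℝ) (μ := fun _ : Fin m => ν)
    (fun i x => x ^ rho F t i)

lemma ET (ν : Measure ℝ) [IsProbabilityMeasure ν] (hν : ν (Set.Icc 0 1) = 1)
    {q : ℕ → ℕ → ℝ≥0∞}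
    (hq1 : ∀ v : ℕ, ∑ d ∈ Finset.range (v + 1), q v d = 1)
    (hq0 : ∀ v d : ℕ, v < d → q v d = 0)
    (hconv : ∀ f : BoundedContinuousFunction ℝ ℝ,
      Tendsto (fun k => ∑ d ∈ Finset.range k, (q (k - 1) d).toReal * f ((d : ℝ) / k))
        atTop (nhds (∫ x, f x ∂ν)))
    {m : ℕ} (F : SimpleGraph (Fin m)) [DecidableRel F.Adj] :
    Tendsto (fun n : ℕ => (∑ φ : Fin m → Fin (n+1), (con1Measure (n+1) q).real (Hset F φ)) /
      ((n:ℝ)+1)^m) atTop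
      (nhds (∫ t : Fin m → ℝ, ∏ i, ∫ x, x ^ (rho F t i) ∂ν
        ∂(Measure.pi fun _ : Fin m => unif01))) := by
  simp_rw [avg_eq]
  refine tendsto_integral_of_dominated_convergence (fun _ => 1) ?_ (integrable_const _) ?_ ?_
  · intro n
    have hm : Measurable (fun (t : Fin m → ℝ) (i : Fin m) => flr n (t i)) :=
      measurable_pi_lambda _ (fun i => (flr_meas n).comp (measurable_pi_apply i))
    exact ((Measurable.of_discrete (f := fun φ : Fin m → Fin (n+1) =>
      (con1Measure (n+1) q).real (Hset F φ))).comp hm).aestronglyMeasurable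
  · intro n
    have := nbhd_prob hq1 hq0 (n+1)
    have : IsProbabilityMeasure (con1Measure (n+1) q) := by unfold con1Measure; infer_instance
    refine Eventually.of_forall fun t => ?_
    rw [Real.norm_eq_abs, abs_of_nonneg measureReal_nonneg]
    exact measureReal_le_one
  · filter_upwards [ae_inj m, ae_pi_of unif01 ae_unif] with t hinj ht
    have hlt : ∀ i j, t i < t j → ∀ᶠ n : ℕ in atTop, flr n (t i) < flr n (t j) := by
      intro i j hij
      have hT : Tendsto (fun n : ℕ => ((n:ℝ)+1) * (t j - t i)) atTop atTop :=
        (tendsto_atTop_add_const_right _ (1:ℝ) tendsto_natCast_atTop_atTop).atTop_mul_const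
          (sub_pos.2 hij)
      filter_upwards [hT.eventually_ge_atTop 1] with n hn
      rw [Fin.lt_def, flr_val (ht i), flr_val (ht j), Nat.lt_iff_add_one_le]
      apply Nat.le_floor
      push_cast
      have := Nat.floor_le (a := ((n:ℝ)+1) * t i) (by have := (ht i).1; positivity)
      linarith
    have hall : ∀ᶠ n : ℕ in atTop, ∀ i j, t i < t j → flr n (t i) < flr n (t j) := by
      rw [eventually_all]; intro i
      rw [eventually_all]; intro j
      by_cases hij : t i < t j
      · filter_upwards [hlt i j hij] with n hn _ using hn
      · simp [hij]
    have hgoal : Tendsto (fun n : ℕ => ∏ i, aR q (rho F t i) (flr n (t i))) atTop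
        (nhds (∏ i, ∫ x, x ^ (rho F t i) ∂ν)) := by
      refine tendsto_finset_prod _ fun i _ => ?_
      refine (aR_tendsto ν hν hq1 hq0 hconv _).comp ?_
      have : (fun n : ℕ => ((flr n (t i) : Fin (n+1)) : ℕ)) = fun n : ℕ => ⌊((n:ℝ)+1) * t i⌋₊ := by
        funext n; exact flr_val (ht i)
      rw [this]
      exact tendsto_nat_floor_atTop.comp
        ((tendsto_atTop_add_const_right _ (1:ℝ) tendsto_natCast_atTop_atTop).atTop_mul_const (ht i).1)
    refine hgoal.congr' ?_
    filter_upwards [hall] with n hn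
    have hmono : ∀ i j, flr n (t i) < flr n (t j) ↔ t i < t j := by
      intro i j
      refine ⟨fun h => ?_, hn i j⟩
      by_contra hc
      rcases (not_lt.1 hc).lt_or_eq with h' | h'
      · exact lt_asymm h (hn j i h')
      · rw [h'] at h; exact lt_irrefl _ h
    have hφ : Function.Injective (fun i => flr n (t i)) := by
      intro i j hij
      by_contra hne
      rcases lt_or_gt_of_ne (fun e => hne (hinj e)) with h | h
      · exact (hn i j h).ne hij
      · exact (hn j i h).ne' hij
    rw [Hset_prob hq1 hq0 F _ hφ]
    simp only [hmono, rho]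

/-- Suppose the indegree distributions of Construction 1 satisfy
`D_n/n → ν` in distribution (here `q (n-1)` is the indegree distribution `ν_n` of the `n`-th
vertex, which has `n−1` predecessors). Then for every finite simple graph `F` on `{1,…,m}`,
`t(F, G_n) → t(F,W)` in probability, where `t(F,G) = n(F,G)/n^m` and
`t(F,W) = ∫_{S^m} ∏_{{i,j}∈E(F)} W(x_i,x_j) dμ_ν^m` on `(S, μ_ν) = ([0,1]², ν × λ)`. -/
theorem stmt12 (ν : Measure ℝ) [IsProbabilityMeasure ν] (hν : ν (Set.Icc 0 1) = 1)
    (q : ℕ → ℕ → ℝ≥0∞)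
    (hq1 : ∀ v : ℕ, ∑ d ∈ Finset.range (v + 1), q v d = 1)
    (hq0 : ∀ v d : ℕ, v < d → q v d = 0)
    (hconv : ∀ f : BoundedContinuousFunction ℝ ℝ,
      Tendsto (fun k => ∑ d ∈ Finset.range k, (q (k - 1) d).toReal * f ((d : ℝ) / k))
        atTop (nhds (∫ x, f x ∂ν)))
    (m : ℕ) (F : SimpleGraph (Fin m)) [DecidableRel F.Adj] :
    ∀ ε > (0 : ℝ), Tendsto
      (fun n => con1Measure n q
        {ω | ε ≤ |(homCount F (graphOf ω) : ℝ) / (n : ℝ) ^ m -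
          ∫ x : Fin m → ℝ × ℝ, edgeProd F Wker x ∂(Measure.pi fun _ : Fin m => muNu ν)|})
      atTop (nhds 0) := by
  intro ε hε
  rw [← tendsto_add_atTop_iff_nat 1]
  set c := ∫ x : Fin m → ℝ × ℝ, edgeProd F Wker x ∂(Measure.pi fun _ : Fin m => muNu ν) with hc
  have hE := ET ν hν hq1 hq0 hconv F
  rw [← tFW ν hν F, ← hc] at hE
  have hprob : ∀ n, IsProbabilityMeasure (con1Measure n q) := by
    intro n
    have := nbhd_prob hq1 hq0 n
    unfold con1Measure; infer_instance
  have hB : Tendsto (fun n : ℕ => ((m:ℝ)^2 / ((n:ℝ)+1) +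
      ((∑ φ : Fin m → Fin (n+1), (con1Measure (n+1) q).real (Hset F φ)) / ((n:ℝ)+1)^m - c)^2) / ε^2)
      atTop (nhds 0) := by
    have h1 : Tendsto (fun n : ℕ => (m:ℝ)^2 / ((n:ℝ)+1)) atTop (nhds 0) :=
      Tendsto.const_div_atTop
        (tendsto_atTop_add_const_right _ (1:ℝ) tendsto_natCast_atTop_atTop) _
    have h2 := (h1.add ((hE.sub_const c).pow 2)).div_const (ε^2)
    simpa using h2
  have hR : Tendsto (fun n : ℕ => (con1Measure (n+1) q).real
        {ω | ε ≤ |(homCount F (graphOf ω) : ℝ) / ((n+1 : ℕ) : ℝ) ^ m - c|}) atTop (nhds 0) := by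
    refine squeeze_zero (fun _ => measureReal_nonneg) (fun n => ?_) hB
    have hch := mul_meas_ge_le_integral_of_nonneg (μ := con1Measure (n+1) q)
      (f := fun ω => ((homCount F (graphOf ω) : ℝ) / ((n:ℝ)+1)^m - c)^2)
      (Eventually.of_forall fun ω => sq_nonneg _) Integrable.of_finite (ε^2)
    have hset : {ω : Fin (n+1) → Finset (Fin (n+1)) |
          ε ≤ |(homCount F (graphOf ω) : ℝ) / ((n+1 : ℕ) : ℝ) ^ m - c|} =
        {ω | ε^2 ≤ ((homCount F (graphOf ω) : ℝ) / ((n:ℝ)+1)^m - c)^2} := by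
      ext ω
      simp only [Set.mem_ofPred_eq]
      push_cast
      rw [sq_le_sq, abs_of_pos hε]
    rw [hset, le_div_iff₀ (by positivity), mul_comm]
    exact hch.trans (var_bound hq1 hq0 F c)
  have := ENNReal.tendsto_ofReal hR
  rw [ENNReal.ofReal_zero] at this
  refine this.congr fun n => ?_
  rw [ofReal_measureReal]
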